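/- There is a universal constant C > 0 such that for all n ≥ 1, every partial injective function I on {0,1}^{2n} with |I| = t, and every x ∈ {0,1}^{2n} \ Dom(I): |R_I \ R_{x,I}| ≤ C·(t²/2^n)·|R_I|. Equivalently, when R_I ≠ ∅, a pair (π,ω) drawn uniformly from R_I satisfies Pr[π * I * ω allows π(x)] ≥ 1 − C·t²/2^n. -/

import Mathlib

/-!
Write `A` for the twirl of `I` by a resolving pair `(π, ω)`, so that `|A| = t`. Extending `A` by
`(u, v)` stays allowable as soon as `u_L` avoids the `t²` values `a_i ⊕ b_i ⊕ b_k` and `v_L`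
avoids the at most `2t²` values `u_L ⊕ a_j ⊕ b_k` and `a_i ⊕ b_i ⊕ a_j`, where `a_i`, `b_i` are
the left halves of the inputs and outputs of `A`. If `2t² < 2^n` a suitable `v` always exists
(`allows_of_not_mem`), so failure forces `u_L = π(x)_L` into a set of `t²` values determined by
`A`. Given `A`, the point `π(x)` is uniform outside `Dom(A)`: composing `π` with a transposition
`(x d)`, `d ∉ Dom(I)`, does not change `A`. Counting these transpositions (`count`) bounds the
failure probability by `t² 2^n / (2^{2n} - t) ≤ 2 t² / 2^n`. If `2t² ≥ 2^n`, the bound with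
constant `2` is trivial.
-/

/-! Common setup: bit strings, databases, chains, canonical triples,
allowable partial injective functions, twirling. -/

instance (w : ℕ) : Fintype (BitVec w) :=
  Fintype.ofEquiv (Fin (2 ^ w)) ⟨BitVec.ofFin, BitVec.toFin, fun _ => rfl, fun _ => rfl⟩

namespace CPO

/-- `W n` is the set of `n`-bit strings. -/
abbrev W (n : ℕ) := BitVec n

/-- `TW n` models `{0,1}^{2n}` as a pair (left half, right half). -/
abbrev TW (n : ℕ) := BitVec n × BitVec n

/-- A database: a partial function from `{0,1}^n` to `{0,1}^n`. -/
abbrev DB (n : ℕ) := BitVec n → Option (BitVec n)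

/-- A triple of databases `(D_h, D_k, D_f)`. -/
abbrev T3 (n : ℕ) := DB n × DB n × DB n

/-- A partial function on `{0,1}^{2n}`. -/
abbrev PF (n : ℕ) := TW n → Option (TW n)

/-- Domain of a database. -/
def dbDom {n : ℕ} (D : DB n) : Set (W n) := {w | D w ≠ none}

/-- Size of a database. -/
noncomputable def dbSize {n : ℕ} (D : DB n) : ℕ := (dbDom D).ncard

/-- Partial injectivity. -/
def PInj {n : ℕ} (I : PF n) : Prop :=
  ∀ x x' y, I x = some y → I x' = some y → x = x'

def piDom {n : ℕ} (I : PF n) : Set (TW n) := {x | I x ≠ none}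

def piIm {n : ℕ} (I : PF n) : Set (TW n) := {y | ∃ x, I x = some y}

noncomputable def piSize {n : ℕ} (I : PF n) : ℕ := (piDom I).ncard

/-- There is a chain `(u, m, v)` in the triple `T = (D_h, D_k, D_f)`:
`D_h(u_L) ⊕ u_R = m = D_f(v_L) ⊕ v_R` and `u_L ⊕ v_L = D_k(m)`. -/
def IsChain {n : ℕ} (T : T3 n) (u : TW n) (m : W n) (v : TW n) : Prop :=
  T.1 u.1 = some (m ^^^ u.2) ∧ T.2.2 v.1 = some (m ^^^ v.2) ∧ T.2.1 m = some (u.1 ^^^ v.1)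

/-- The set of chains of a triple, as triples `(u, (m, v))`. -/
def chainsSet {n : ℕ} (T : T3 n) : Set (TW n × W n × TW n) :=
  {c | IsChain T c.1 c.2.1 c.2.2}

/-- Two chains collide if they share `m`, `u_L` or `v_L`. -/
def Collide {n : ℕ} (c c' : TW n × W n × TW n) : Prop :=
  c.2.1 = c'.2.1 ∨ c.1.1 = c'.1.1 ∨ c.2.2.1 = c'.2.2.1

/-- A triple is canonical if no two distinct chains collide and every
input-output pair of each database participates in exactly one chain. -/
def Canonical {n : ℕ} (T : T3 n) : Prop :=
  (∀ c ∈ chainsSet T, ∀ c' ∈ chainsSet T, c ≠ c' → ¬ Collide c c') ∧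
  (∀ w, T.1 w ≠ none → ∃! c, c ∈ chainsSet T ∧ c.1.1 = w) ∧
  (∀ m, T.2.1 m ≠ none → ∃! c, c ∈ chainsSet T ∧ c.2.1 = m) ∧
  (∀ w, T.2.2 w ≠ none → ∃! c, c ∈ chainsSet T ∧ c.2.2.1 = w)

/-- `Supports T I` : the partial function supported by `T` is exactly `I`
(i.e. `Supp(T) = I`). -/
def Supports {n : ℕ} (T : T3 n) (I : PF n) : Prop :=
  ∀ u v, I u = some v ↔ ∃ m, IsChain T u m v

open Classical in
/-- The partial function supported by a triple (choice-based representative). -/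
noncomputable def suppFun {n : ℕ} (T : T3 n) : PF n :=
  fun u => if h : ∃ v, ∃ m, IsChain T u m v then some h.choose else none

/-- An allowable partial injective function: no input, output, or internal
left collisions. -/
def AllowableI {n : ℕ} (I : PF n) : Prop :=
  PInj I ∧
  (∀ x x', x ∈ piDom I → x' ∈ piDom I → x ≠ x' → x.1 ≠ x'.1) ∧
  (∀ y y', y ∈ piIm I → y' ∈ piIm I → y ≠ y' → y.1 ≠ y'.1) ∧
  (∀ x y x' y', I x = some y → x' ∈ piDom I → y' ∈ piIm I →
    (x, y) ≠ (x', y') → x.1 ^^^ y.1 ≠ x'.1 ^^^ y'.1)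

/-- `A` allows `u` if some extension `A[u→v]` is allowable. -/
def Allows {n : ℕ} (A : PF n) (u : TW n) : Prop :=
  ∃ v, AllowableI (Function.update A u (some v))

/-- `V_{u,A}`: the set of `v` such that `A[u→v]` is allowable. -/
def Vset {n : ℕ} (A : PF n) (u : TW n) : Set (TW n) :=
  {v | AllowableI (Function.update A u (some v))}

/-- `L_{u,A}`: the set of left substrings of elements of `V_{u,A}`. -/
def Lset {n : ℕ} (A : PF n) (u : TW n) : Set (W n) :=
  {c | ∃ v ∈ Vset A u, v.1 = c}

/-- `D(I)`: the set of canonical triples supporting `I`. -/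
def DofA {n : ℕ} (I : PF n) : Set (T3 n) := {T | Canonical T ∧ Supports T I}

end CPO
namespace CPO

/-- `π * I * ω := {(π(x), ω⁻¹(y)) : (x,y) ∈ I}`, as a partial function. -/
def twirl {n : ℕ} (π ω : Equiv.Perm (TW n)) (I : PF n) : PF n :=
  fun a => (I (π.symm a)).map ω.symm

/-- `(π, ω)` resolves `I` if `π * I * ω` is allowable. -/
def Resolves {n : ℕ} (π ω : Equiv.Perm (TW n)) (I : PF n) : Prop :=
  AllowableI (twirl π ω I)

/-- `R_I`: the set of permutation pairs resolving `I`. -/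
def RI {n : ℕ} (I : PF n) : Set (Equiv.Perm (TW n) × Equiv.Perm (TW n)) :=
  {p | Resolves p.1 p.2 I}

/-- `R_{x,I}`: the pairs resolving `I` whose inner database allows `π(x)`. -/
def RxI {n : ℕ} (I : PF n) (x : TW n) : Set (Equiv.Perm (TW n) × Equiv.Perm (TW n)) :=
  {p | p ∈ RI I ∧ Allows (twirl p.1 p.2 I) (p.1 x)}

end CPO
namespace CPO

/-- The (finite) domain of a partial function on `{0,1}^{2n}`. -/
def domF {n : ℕ} (A : PF n) : Finset (TW n) := Finset.univ.filter (fun x => A x ≠ none)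

/-- The left half of `A x`; the junk value `0` is used for `x` outside the domain. -/
def outL {n : ℕ} (A : PF n) (x : TW n) : W n := ((A x).getD (0, 0)).1

/-- The forbidden left halves of a new input: `x_L ⊕ A(x)_L ⊕ A(x')_L` for `x, x' ∈ Dom(A)`.
The diagonal `x = x'` yields `x_L`, so input collisions are included. -/
def badIn {n : ℕ} (A : PF n) : Finset (W n) :=
  (domF A ×ˢ domF A).image (fun p => p.1.1 ^^^ outL A p.1 ^^^ outL A p.2)

/-- The forbidden left halves of the output of a new input `u`: `u_L ⊕ x_L ⊕ A(x')_L` and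
`x_L ⊕ A(x)_L ⊕ x'_L` for `x, x' ∈ Dom(A)`. The diagonal of the second family yields `A(x)_L`,
so output collisions are included. -/
def badOut {n : ℕ} (A : PF n) (u : TW n) : Finset (W n) :=
  (domF A ×ˢ domF A).image (fun p => u.1 ^^^ p.1.1 ^^^ outL A p.2) ∪
  (domF A ×ˢ domF A).image (fun p => p.1.1 ^^^ outL A p.1 ^^^ p.2.1)

lemma card_W (n : ℕ) : Fintype.card (W n) = 2 ^ n := by
  rw [← Nat.card_eq_fintype_card,
    Nat.card_congr (⟨BitVec.toFin, BitVec.ofFin, fun _ => rfl, fun _ => rfl⟩ : W n ≃ Fin (2 ^ n))]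
  simp

lemma xor_solve {n : ℕ} {a b c d : W n} (h : a ^^^ b = c ^^^ d) : a = c ^^^ d ^^^ b := by
  rw [← h, BitVec.xor_assoc, BitVec.xor_self, BitVec.xor_zero]

lemma mem_domF {n : ℕ} {A : PF n} {x y : TW n} (h : A x = some y) : x ∈ domF A := by
  simp [domF, h]

lemma outL_eq {n : ℕ} {A : PF n} {x y : TW n} (h : A x = some y) : outL A x = y.1 := by
  simp [outL, h]

lemma card_badIn {n : ℕ} (A : PF n) : (badIn A).card ≤ (domF A).card ^ 2 :=
  Finset.card_image_le.trans (by rw [Finset.card_product, sq])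

lemma card_badOut {n : ℕ} (A : PF n) (u : TW n) :
    (badOut A u).card ≤ 2 * (domF A).card ^ 2 := by
  refine (Finset.card_union_le _ _).trans ?_
  rw [two_mul]
  refine Nat.add_le_add ?_ ?_ <;>
    exact Finset.card_image_le.trans (by rw [Finset.card_product, sq])

/-- An allowable `A` with `2 |A|² < 2^n` allows every `u` whose left half is not forbidden:
some output left half then remains available. -/
lemma allows_of_not_mem {n : ℕ} {A : PF n} {u : TW n} (hA : AllowableI A)
    (hc : 2 * (domF A).card ^ 2 < 2 ^ n) (hu : u.1 ∉ badIn A) : Allows A u := by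
  obtain ⟨c, hv⟩ : ∃ c : W n, c ∉ badOut A u := by
    by_contra! h
    have h1 : badOut A u = Finset.univ := Finset.eq_univ_iff_forall.2 h
    have h2 := card_badOut A u
    rw [h1, Finset.card_univ, card_W] at h2
    omega
  have f1 : ∀ x y x' y', A x = some y → A x' = some y' → u.1 ≠ x.1 ^^^ y.1 ^^^ y'.1 := by
    intro x y x' y' h h' he
    refine hu (Finset.mem_image.2
      ⟨(x, x'), Finset.mem_product.2 ⟨mem_domF h, mem_domF h'⟩, ?_⟩)
    simp only [outL_eq h, outL_eq h', he]
  have f2 : ∀ x y x' y', A x = some y → A x' = some y' → c ≠ u.1 ^^^ x.1 ^^^ y'.1 := by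
    intro x y x' y' h h' he
    refine hv (Finset.mem_union_left _ (Finset.mem_image.2
      ⟨(x, x'), Finset.mem_product.2 ⟨mem_domF h, mem_domF h'⟩, ?_⟩))
    simp only [outL_eq h', he]
  have f3 : ∀ x y x' y', A x = some y → A x' = some y' → c ≠ x.1 ^^^ y.1 ^^^ x'.1 := by
    intro x y x' y' h h' he
    refine hv (Finset.mem_union_right _ (Finset.mem_image.2
      ⟨(x, x'), Finset.mem_product.2 ⟨mem_domF h, mem_domF h'⟩, ?_⟩))
    simp only [outL_eq h, he]
  have g1 : ∀ x y, A x = some y → u.1 ≠ x.1 := by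
    intro x y h he
    apply f1 x y x y h h
    rw [he, BitVec.xor_assoc, BitVec.xor_self, BitVec.xor_zero]
  have g2 : ∀ x y, A x = some y → c ≠ y.1 := by
    intro x y h he
    apply f3 x y x y h h
    rw [he, BitVec.xor_comm x.1, BitVec.xor_assoc, BitVec.xor_self, BitVec.xor_zero]
  obtain ⟨p1, p2, p3, p4⟩ := hA
  refine ⟨(c, 0), ?_⟩
  set B := Function.update A u (some ((c, 0) : TW n)) with hB
  have hup : ∀ x y, B x = some y → (x = u ∧ y = (c, 0)) ∨ A x = some y := by
    intro x y h
    by_cases hx : x = u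
    · subst hx
      left
      simpa [hB, eq_comm] using h
    · right
      simpa [hB, hx] using h
  have hdom : ∀ x, x ∈ piDom B → x = u ∨ ∃ y, A x = some y := by
    intro x hx
    obtain ⟨y, hy⟩ := Option.ne_none_iff_exists'.1 hx
    rcases hup x y hy with h | h
    · exact Or.inl h.1
    · exact Or.inr ⟨y, h⟩
  have him : ∀ y, y ∈ piIm B → y = (c, 0) ∨ ∃ x, A x = some y := by
    rintro y ⟨x, hy⟩
    rcases hup x y hy with h | h
    · exact Or.inl h.2
    · exact Or.inr ⟨x, h⟩
  have D : ∀ {x y}, A x = some y → x ∈ piDom A := fun h => by simp [piDom, h]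
  refine ⟨?_, ?_, ?_, ?_⟩
  · intro x x' y h h'
    rcases hup _ _ h with ⟨rfl, rfl⟩ | k <;> rcases hup _ _ h' with ⟨rfl, h2⟩ | k'
    · rfl
    · exact absurd rfl (g2 _ _ k')
    · subst h2
      exact absurd rfl (g2 _ _ k)
    · exact p1 _ _ _ k k'
  · intro x x' h h' hne
    rcases hdom _ h with rfl | ⟨y, k⟩ <;> rcases hdom _ h' with rfl | ⟨y', k'⟩
    · exact absurd rfl hne
    · exact g1 _ _ k'
    · exact (g1 _ _ k).symm
    · exact p2 _ _ (D k) (D k') hne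
  · intro y y' h h' hne
    rcases him _ h with rfl | ⟨x, k⟩ <;> rcases him _ h' with rfl | ⟨x', k'⟩
    · exact absurd rfl hne
    · exact g2 _ _ k'
    · exact (g2 _ _ k).symm
    · exact p3 _ _ ⟨_, k⟩ ⟨_, k'⟩ hne
  · intro x y x' y' h hx' hy' hne he
    rcases hup _ _ h with ⟨rfl, rfl⟩ | k <;> rcases hdom _ hx' with rfl | ⟨z, hz⟩ <;>
      rcases him _ hy' with rfl | ⟨w, hw⟩
    · exact hne rfl
    · exact g2 _ _ hw (BitVec.xor_right_inj _ |>.1 he)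
    · exact g1 _ _ hz (BitVec.xor_left_inj _ |>.1 he)
    · refine f2 _ _ _ _ hz hw ((xor_solve (a := c) ((BitVec.xor_comm c x.1).trans he)).trans ?_)
      ac_rfl
    · refine f2 _ _ _ _ k k
        ((xor_solve (a := c) ((BitVec.xor_comm c x'.1).trans he.symm)).trans ?_)
      ac_rfl
    · exact f1 _ _ _ _ k hw (xor_solve he.symm)
    · exact f3 _ _ _ _ k hz (xor_solve (a := c) ((BitVec.xor_comm c x'.1).trans he.symm))
    · exact p4 _ _ _ _ k (D hz) ⟨_, hw⟩ hne he

lemma card_domF_twirl {n : ℕ} (π ω : Equiv.Perm (TW n)) (I : PF n) :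
    (domF (twirl π ω I)).card = (domF I).card := by
  symm
  refine Finset.card_bij (fun a _ => π a) ?_ (fun _ _ _ _ h => π.injective h) ?_
  · intro a ha
    simpa [domF, twirl] using ha
  · intro b hb
    exact ⟨π.symm b, by simpa [domF, twirl] using hb, by simp⟩

/-- The twirl depends only on the values of `π` on the domain of `I`. -/
lemma twirl_mul_swap {n : ℕ} (π ω : Equiv.Perm (TW n)) (I : PF n) {x d : TW n}
    (hx : I x = none) (hd : I d = none) : twirl (π * Equiv.swap x d) ω I = twirl π ω I := by
  funext a
  have h : I (Equiv.swap x d (π.symm a)) = I (π.symm a) := by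
    rw [Equiv.swap_apply_def]
    split_ifs with h1 h2
    · rw [h1, hx, hd]
    · rw [h2, hx, hd]
    · rfl
  change (I (Equiv.swap x d (π.symm a))).map ω.symm = _
  rw [h]
  rfl

open Classical in
/-- Double counting of the pairs of a failing `(π, ω)` and a point `d ∉ Dom(I)`. The map
`((π, ω), d) ↦ ((π ∘ (x d), ω), d)` is injective and keeps the twirl, hence it lands in `R_I`;
`d` is sent by `π ∘ (x d)` to `π(x)`, whose left half is among at most `t²` forbidden values. -/
lemma count {n : ℕ} (I : PF n) (x : TW n) (hx : I x = none)
    (hc : 2 * (domF I).card ^ 2 < 2 ^ n) :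
    (RI I \ RxI I x).toFinset.card * (2 ^ n * 2 ^ n - (domF I).card) ≤
      (RI I).toFinset.card * ((domF I).card ^ 2 * 2 ^ n) := by
  have hcompl : (domF I)ᶜ.card = 2 ^ n * 2 ^ n - (domF I).card := by
    rw [Finset.card_compl, Fintype.card_prod, card_W]
  rw [← hcompl, ← Finset.card_product]
  have hfib : ∀ q : Equiv.Perm (TW n) × Equiv.Perm (TW n),
      (Finset.univ.filter (fun d => (q.1 d).1 ∈ badIn (twirl q.1 q.2 I))).card
        ≤ (domF I).card ^ 2 * 2 ^ n := by
    intro q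
    calc _ ≤ (badIn (twirl q.1 q.2 I) ×ˢ (Finset.univ : Finset (W n))).card := by
          refine Finset.card_le_card_of_injOn (fun d => q.1 d) ?_
            (fun _ _ _ _ h => q.1.injective h)
          intro d hd
          have hd := (Finset.mem_filter.1 hd).2
          exact Finset.mem_product.2 ⟨hd, Finset.mem_univ _⟩
      _ ≤ _ := by
          rw [Finset.card_product, Finset.card_univ, card_W]
          refine Nat.mul_le_mul_right _ ?_
          rw [← card_domF_twirl q.1 q.2 I]
          exact card_badIn _
  refine le_trans ?_ (Finset.sum_le_card_nsmul (RI I).toFinset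
    (fun q => (Finset.univ.filter (fun d => (q.1 d).1 ∈ badIn (twirl q.1 q.2 I))).card)
    _ (fun q _ => hfib q))
  rw [← Finset.card_sigma]
  refine Finset.card_le_card_of_injOn
    (fun p => ⟨(p.1.1 * Equiv.swap x p.2, p.1.2), p.2⟩) ?_ ?_
  · rintro ⟨⟨π, ω⟩, d⟩ h
    obtain ⟨h1, h2⟩ := Finset.mem_product.1 h
    have hd : I d = none := by simpa [domF] using h2
    obtain ⟨hR, hN⟩ := Set.mem_toFinset.1 h1
    have hA : AllowableI (twirl π ω I) := hR
    have htw := twirl_mul_swap π ω I hx hd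
    refine Finset.mem_sigma.2 ⟨Set.mem_toFinset.2 ?_, Finset.mem_filter.2 ⟨Finset.mem_univ _, ?_⟩⟩
    · change AllowableI (twirl (π * Equiv.swap x d) ω I)
      rwa [htw]
    · change ((π * Equiv.swap x d) d).1 ∈ badIn (twirl (π * Equiv.swap x d) ω I)
      rw [htw, Equiv.Perm.mul_apply, Equiv.swap_apply_right]
      by_contra hbad
      refine hN ⟨hR, allows_of_not_mem hA ?_ hbad⟩
      rwa [card_domF_twirl]
  · rintro ⟨⟨π, ω⟩, d⟩ - ⟨⟨π', ω'⟩, d'⟩ - h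
    simp only [Sigma.mk.injEq, Prod.mk.injEq, heq_eq_eq] at h
    obtain ⟨⟨h1, rfl⟩, rfl⟩ := h
    rw [mul_right_cancel h1]

/-- For a uniformly random pair resolving `I`, the inner
database allows `π(x)` except with probability `O(t²/2^n)` (counting form). -/
theorem resolving_allows_whp :
    ∃ C : ℝ, 0 < C ∧ ∀ (n t : ℕ), 1 ≤ n → ∀ I : PF n, PInj I → piSize I = t →
      ∀ x : TW n, I x = none →
      ((RI I \ RxI I x).ncard : ℝ) ≤ C * ((t : ℝ) ^ 2 / 2 ^ n) * ((RI I).ncard : ℝ) := by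
  classical
  refine ⟨2, by norm_num, ?_⟩
  intro n t _ I _ ht x hx
  have hdt : (domF I).card = t := by
    rw [← ht, piSize, ← Set.ncard_coe_finset]
    congr 1
    ext a
    simp [domF, piDom]
  have hpos : (0 : ℝ) < 2 ^ n := by positivity
  by_cases hc : 2 * t ^ 2 < 2 ^ n
  · have h := count I x hx (by rwa [hdt])
    rw [hdt, ← Set.ncard_eq_toFinset_card', ← Set.ncard_eq_toFinset_card'] at h
    -- Since `t ≤ t² ≤ 2^n / 2`, at least half of `{0,1}^{2n}` lies outside the domain of `I`.
    have hhalf : 2 ^ n * 2 ^ n ≤ 2 * (2 ^ n * 2 ^ n - t) := by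
      have h1 : t ≤ t ^ 2 := Nat.le_self_pow (by norm_num) t
      have h2 : 2 ^ n ≤ 2 ^ n * 2 ^ n := Nat.le_mul_self _
      omega
    have h3 : (RI I \ RxI I x).ncard * (2 ^ n * 2 ^ n) ≤
        2 * ((RI I).ncard * (t ^ 2 * 2 ^ n)) := by
      calc _ ≤ (RI I \ RxI I x).ncard * (2 * (2 ^ n * 2 ^ n - t)) := Nat.mul_le_mul_left _ hhalf
        _ = 2 * ((RI I \ RxI I x).ncard * (2 ^ n * 2 ^ n - t)) := by ring
        _ ≤ _ := Nat.mul_le_mul_left _ h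
    have h4 : (RI I \ RxI I x).ncard * 2 ^ n ≤ 2 * t ^ 2 * (RI I).ncard := by
      refine Nat.le_of_mul_le_mul_right (c := 2 ^ n) ?_ (by positivity)
      calc _ = (RI I \ RxI I x).ncard * (2 ^ n * 2 ^ n) := by ring
        _ ≤ _ := h3
        _ = _ := by ring
    have h5 : ((RI I \ RxI I x).ncard : ℝ) * 2 ^ n ≤ 2 * (t : ℝ) ^ 2 * ((RI I).ncard : ℝ) := by
      exact_mod_cast h4
    calc _ ≤ 2 * (t : ℝ) ^ 2 * ((RI I).ncard : ℝ) / 2 ^ n := (le_div_iff₀ hpos).2 h5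
      _ = _ := by ring
  · -- The bound is trivial here, as its constant is at least `1`.
    have h1 : (2 : ℝ) ^ n ≤ 2 * (t : ℝ) ^ 2 := by exact_mod_cast not_lt.1 hc
    have h2 : (1 : ℝ) ≤ 2 * ((t : ℝ) ^ 2 / 2 ^ n) := by
      rw [← mul_div_assoc]
      exact (one_le_div hpos).2 h1
    have h3 : ((RI I \ RxI I x).ncard : ℝ) ≤ (RI I).ncard := by
      exact_mod_cast Set.ncard_le_ncard Set.sdiff_subset (Set.toFinite _)
    exact h3.trans (le_mul_of_one_le_left (Nat.cast_nonneg _) h2)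

end CPO
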